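/- Let G be a finite group acting by pseudo-reflections on a finite-dimensional vector space V over a field of characteristic not dividing |G|. Then the invariant ring k[V]^G is a polynomial algebra on dim V homogeneous generators. -/

import Mathlib

open MvPolynomial

variable {k : Type*} [Field k] {r : ℕ}

/-- The algebra automorphism of `k[V] = k[X_1, …, X_r]` induced by a matrix `g`,
sending `X i` to `∑ j, g i j • X j`. -/
noncomputable def matrixAct (g : GL (Fin r) k) :
    MvPolynomial (Fin r) k →ₐ[k] MvPolynomial (Fin r) k :=
  MvPolynomial.aeval fun i => ∑ j, ((g : Matrix (Fin r) (Fin r) k) i j) • X j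

/-- `g ∈ GL(V)` is a pseudo-reflection: it has finite order, is not the identity,
and its fixed subspace has codimension 1 (equivalently `rank (g - 1) = 1`). -/
def IsPseudoReflection (g : GL (Fin r) k) : Prop :=
  IsOfFinOrder g ∧ g ≠ 1 ∧ Matrix.rank ((g : Matrix (Fin r) (Fin r) k) - 1) = 1

/-!
A minimal set of homogeneous generators of the Hilbert ideal generates the algebra of invariants, by
averaging over the group. Chevalley's lemma, proved by dividing `s • h - h` by the linear form of
each reflection `s`, shows that these generators are independent in the sense of Lech. Independent
elements `f₁, …, fₙ` of the ideal `(X₁, …, X_r)` satisfy `n ≤ r`: if `fᵢ = d aᵢ` for the Koszul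
differential `d` of the variables, then `a₁ ∧ ⋯ ∧ aₙ` is not a boundary modulo `(f₁, …, fₙ)`, so it
is a nonzero element of the exterior algebra of a free module of rank `r`. This replaces the usual
argument with Jacobians and Euler's formula, in which positive characteristic needs separate care.
Finally the polynomial ring is integral over the invariants, so that at most `r` generators form a
transcendence basis: they are algebraically independent, and there are exactly `r` of them.
-/

section Koszul

variable {S M : Type*} [CommRing S] [AddCommGroup M] [Module S M]

/-- A set `T` of elements of a commutative ring is independent in the sense of Lech if every
relation `∑ cᵢ fᵢ = 0` among elements `fᵢ` of `T` has all its coefficients in the ideal spanned by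
`T`; equivalently, `T` is a basis of the conormal module `I ⧸ I ^ 2` over `S ⧸ I`, `I = span T`.
Here the relation is solved for one of its terms. -/
def IsLechIndependent (T : Set S) : Prop :=
  ∀ f ∈ T, ∀ c, f * c ∈ Ideal.span (T \ {f}) → c ∈ Ideal.span T

/-- The differential `d m₁ ∧ ⋯ ↦ d m₁ • (m₂ ∧ ⋯) - ⋯` of the Koszul complex of a linear form `d`,
encoded as left contraction on the Clifford algebra of the zero quadratic form. -/
def koszulDifferential (d : Module.Dual S M) : ExteriorAlgebra S M →ₗ[S] ExteriorAlgebra S M :=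
  CliffordAlgebra.contractLeft (Q := 0) d

theorem koszulDifferential_one (d : Module.Dual S M) : koszulDifferential d 1 = 0 :=
  CliffordAlgebra.contractLeft_one _ d

theorem koszulDifferential_ι_mul (d : Module.Dual S M) (m : M) (w : ExteriorAlgebra S M) :
    koszulDifferential d (ExteriorAlgebra.ι S m * w) =
      d m • w - ExteriorAlgebra.ι S m * koszulDifferential d w :=
  CliffordAlgebra.contractLeft_ι_mul d m w

theorem koszulDifferential_koszulDifferential (d : Module.Dual S M) (w : ExteriorAlgebra S M) :
    koszulDifferential d (koszulDifferential d w) = 0 :=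
  CliffordAlgebra.contractLeft_contractLeft d w

theorem algebraMapInv_koszulDifferential_mem_range (d : Module.Dual S M)
    (w : ExteriorAlgebra S M) :
    ExteriorAlgebra.algebraMapInv (koszulDifferential d w) ∈ LinearMap.range d := by
  induction w using CliffordAlgebra.left_induction with
  | algebraMap s => simp [koszulDifferential, CliffordAlgebra.contractLeft_algebraMap]
  | add v w hv hw => simpa only [map_add] using add_mem hv hw
  | ι_mul w m _ =>
    have hιm : ExteriorAlgebra.algebraMapInv (ExteriorAlgebra.ι S m) = 0 := by
      simp [ExteriorAlgebra.algebraMapInv]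
    have hdm : ExteriorAlgebra.algebraMapInv (koszulDifferential d (ExteriorAlgebra.ι S m * w)) =
        ExteriorAlgebra.algebraMapInv w • d m := by
      rw [koszulDifferential_ι_mul, map_sub, map_mul, hιm, zero_mul, sub_zero, map_smul,
        smul_eq_mul, smul_eq_mul, mul_comm]
    exact hdm ▸ Submodule.smul_mem _ _ (LinearMap.mem_range_self d m)

theorem one_notMem_range_koszulDifferential_sup {d : Module.Dual S M} {I : Ideal S}
    (hd : LinearMap.range d ≠ ⊤) (hI : I ≤ LinearMap.range d) :
    (1 : ExteriorAlgebra S M) ∉ LinearMap.range (koszulDifferential d) ⊔ I • ⊤ := by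
  intro h_one
  have hle : LinearMap.range (koszulDifferential d) ⊔ I • ⊤ ≤
      (LinearMap.range d).comap ExteriorAlgebra.algebraMapInv.toLinearMap := by
    refine sup_le ?_ (Submodule.smul_le.2 fun s hs w _ => ?_)
    · rintro _ ⟨w, rfl⟩
      exact algebraMapInv_koszulDifferential_mem_range d w
    · rw [Submodule.mem_comap, map_smul, smul_eq_mul]
      exact Ideal.mul_mem_right _ _ (hI hs)
  have h_one_range := hle h_one
  rw [Submodule.mem_comap, AlgHom.toLinearMap_apply, map_one] at h_one_range
  exact hd ((Ideal.eq_top_iff_one _).2 h_one_range)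

theorem koszulDifferential_prod_mem_smul_top {d : Module.Dual S M} {J : Ideal S} {l : List M}
    (hl : ∀ m ∈ l, d m ∈ J) :
    koszulDifferential d (l.map (ExteriorAlgebra.ι S)).prod ∈
      J • (⊤ : Submodule S (ExteriorAlgebra S M)) := by
  induction l with
  | nil => simp only [List.map_nil, List.prod_nil, koszulDifferential_one, zero_mem]
  | cons m l ih =>
    rw [List.map_cons, List.prod_cons, koszulDifferential_ι_mul]
    refine sub_mem (Submodule.smul_mem_smul (hl m List.mem_cons_self) Submodule.mem_top) ?_
    exact Submodule.smul_top_le_comap_smul_top J (LinearMap.mulLeft S (ExteriorAlgebra.ι S m))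
      (ih fun n hn => hl n (List.mem_cons_of_mem m hn))

theorem basis_mem_smul_top_iff {ι N : Type*} [AddCommGroup N] [Module S N]
    (b : Module.Basis ι S N) {I : Ideal S} {y : N} :
    y ∈ I • (⊤ : Submodule S N) ↔ ∀ i, b.repr y i ∈ I := by
  constructor
  · intro hy i
    simpa using Submodule.smul_top_le_comap_smul_top I (b.coord i) hy
  · intro hy
    rw [← b.linearCombination_repr y]
    exact sum_mem fun i _ => Submodule.smul_mem_smul (hy i) Submodule.mem_top

theorem mem_smul_top_of_smul_mem_smul_top {N : Type*} [AddCommGroup N] [Module S N]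
    [Module.Free S N] {I J : Ideal S} {c : S} (hc : ∀ s, c * s ∈ J → s ∈ I) {y : N}
    (hy : c • y ∈ J • (⊤ : Submodule S N)) : y ∈ I • (⊤ : Submodule S N) := by
  rw [basis_mem_smul_top_iff (Module.Free.chooseBasis S N)] at hy ⊢
  intro i
  refine hc _ ?_
  simpa only [map_smul, Finsupp.smul_apply, smul_eq_mul] using hy i

theorem free_exteriorAlgebra [Module.Free S M] : Module.Free S (ExteriorAlgebra S M) :=
  letI := IsWellOrder.linearOrder (WellOrderingRel (α := Module.Free.ChooseBasisIndex S M))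
  .of_basis (Module.Free.chooseBasis S M).ExteriorAlgebra

/- Applying the differential to `m ∧ w = ∂η + (d m) • θ + z` with `z ∈ J Λ` gives
`d m • (w - ∂θ) ∈ J Λ`, and `d m` can be cancelled at the cost of replacing `J` by `I`. -/
theorem mem_range_koszulDifferential_sup_of_ι_mul_mem [Module.Free S M] {d : Module.Dual S M}
    {m : M} {I J : Ideal S} (hI : I ≤ Ideal.span {d m} ⊔ J) (hJ : ∀ s, d m * s ∈ J → s ∈ I)
    {w : ExteriorAlgebra S M} (hw : koszulDifferential d w ∈ J • (⊤ : Submodule S _))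
    (hmw : ExteriorAlgebra.ι S m * w ∈ LinearMap.range (koszulDifferential d) ⊔ I • ⊤) :
    w ∈ LinearMap.range (koszulDifferential d) ⊔ I • ⊤ := by
  have := free_exteriorAlgebra (S := S) (M := M)
  obtain ⟨_, ⟨η, rfl⟩, y, hy, hηy⟩ := Submodule.mem_sup.1 hmw
  have hy' := Submodule.smul_mono_left hI hy
  rw [Submodule.sup_smul, Submodule.ideal_span_singleton_smul] at hy'
  obtain ⟨_, ⟨θ, -, rfl⟩, z, hz, rfl⟩ := Submodule.mem_sup.1 hy'
  have h_diff : d m • w - ExteriorAlgebra.ι S m * koszulDifferential d w =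
      d m • koszulDifferential d θ + koszulDifferential d z := by
    rw [← koszulDifferential_ι_mul, ← hηy, map_add, koszulDifferential_koszulDifferential, zero_add,
      map_add]
    exact congrArg (· + _) (map_smul _ _ _)
  have h_smul : d m • (w - koszulDifferential d θ) ∈ J • (⊤ : Submodule S _) := by
    have h_eq : d m • (w - koszulDifferential d θ) =
        koszulDifferential d z + ExteriorAlgebra.ι S m * koszulDifferential d w := by
      rw [smul_sub, sub_eq_iff_eq_add.1 h_diff]
      abel
    rw [h_eq]
    exact add_mem (Submodule.smul_top_le_comap_smul_top J (koszulDifferential d) hz)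
      (Submodule.smul_top_le_comap_smul_top J (LinearMap.mulLeft S (ExteriorAlgebra.ι S m)) hw)
  exact Submodule.mem_sup.2 ⟨_, ⟨θ, rfl⟩, _, mem_smul_top_of_smul_mem_smul_top hJ h_smul,
    add_sub_cancel _ _⟩

theorem IsLechIndependent.prod_ι_notMem [Module.Free S M] {T : Set S} (hT : IsLechIndependent T)
    {d : Module.Dual S M} (hd : LinearMap.range d ≠ ⊤) (hTd : T ⊆ LinearMap.range d) {l : List M}
    (hl : (l.map d).Nodup) (hlT : ∀ m ∈ l, d m ∈ T) :
    (l.map (ExteriorAlgebra.ι S)).prod ∉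
      LinearMap.range (koszulDifferential d) ⊔ Ideal.span T • ⊤ := by
  induction l with
  | nil => exact one_notMem_range_koszulDifferential_sup hd (Ideal.span_le.2 hTd)
  | cons m l ih =>
    rw [List.map_cons, List.nodup_cons] at hl
    have hmT : d m ∈ T := hlT m List.mem_cons_self
    have hlT' : ∀ n ∈ l, d n ∈ T := fun n hn => hlT n (List.mem_cons_of_mem m hn)
    have hspan : Ideal.span T ≤ Ideal.span {d m} ⊔ Ideal.span (T \ {d m}) := by
      rw [← Ideal.span_union, Set.union_sdiff_self]
      exact Ideal.span_mono Set.subset_union_right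
    have h_diff : koszulDifferential d (l.map (ExteriorAlgebra.ι S)).prod ∈
        Ideal.span (T \ {d m}) • (⊤ : Submodule S _) :=
      koszulDifferential_prod_mem_smul_top fun n hn => Ideal.subset_span
        ⟨hlT' n hn, fun hnm => hl.1 (List.mem_map.2 ⟨n, hn, hnm⟩)⟩
    rw [List.map_cons, List.prod_cons]
    exact fun hml => ih hl.2 hlT'
      (mem_range_koszulDifferential_sup_of_ι_mul_mem hspan (hT _ hmT) h_diff hml)

theorem alternatingMap_eq_zero_of_finrank_lt_card [Nontrivial S] [Module.Free S M]
    [Module.Finite S M] {ι N : Type*} [Fintype ι] [AddCommGroup N] [Module S N]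
    (h : Module.finrank S M < Fintype.card ι) (f : M [⋀^ι]→ₗ[S] N) : f = 0 := by
  refine (Module.Free.chooseBasis S M).ext_alternating fun v hv => ?_
  rw [Module.finrank_eq_card_chooseBasisIndex] at h
  exact (h.not_ge (Fintype.card_le_of_injective v hv)).elim

theorem IsLechIndependent.card_le_finrank [Module.Free S M] [Module.Finite S M] {t : Finset S}
    (ht : IsLechIndependent (t : Set S)) {d : Module.Dual S M} (hd : LinearMap.range d ≠ ⊤)
    (htd : (t : Set S) ⊆ LinearMap.range d) : t.card ≤ Module.finrank S M := by
  by_contra! hcard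
  have : Nontrivial S := Submodule.nontrivial_iff _ |>.1 ⟨_, _, hd⟩
  obtain ⟨l, hl⟩ : ∃ l : List M, l.map d = t.toList := by
    rw [← Set.mem_range, Set.range_list_map]
    exact fun f hf => htd (Finset.mem_toList.1 hf)
  refine ht.prod_ι_notMem hd htd (l := l) (hl ▸ t.nodup_toList) (fun m hm => ?_) ?_
  · rw [Finset.mem_coe, ← Finset.mem_toList, ← hl]
    exact List.mem_map_of_mem hm
  · have hl_card : Module.finrank S M < Fintype.card (Fin l.length) := by
      rwa [Fintype.card_fin, ← l.length_map d, hl, Finset.length_toList]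
    have h_zero : (l.map (ExteriorAlgebra.ι S)).prod = 0 := by
      have hι := DFunLike.congr_fun (alternatingMap_eq_zero_of_finrank_lt_card hl_card
        (ExteriorAlgebra.ιMulti S l.length)) l.get
      rwa [ExteriorAlgebra.ιMulti_apply, ← Function.comp_def, ← List.map_ofFn, List.ofFn_get] at hι
    exact h_zero ▸ zero_mem _

end Koszul

section LinearAlgebra

open Submodule in
theorem exists_finset_span_eq_and_notMem_span_sdiff {R N : Type*} [Semiring R] [AddCommMonoid N]
    [Module R N] [IsNoetherian R N] (P : Set N) :
    ∃ t : Finset N, (t : Set N) ⊆ P ∧ span R (t : Set N) = span R P ∧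
      ∀ f ∈ t, f ∉ span R ((t : Set N) \ {f}) := by
  classical
  obtain ⟨t₀, ht₀⟩ := (fg_span_iff_fg_span_finset_subset P).1 (IsNoetherian.noetherian (span R P))
  obtain ⟨t, ⟨htP, ht⟩, ht_min⟩ := exists_minimal_of_wellFoundedLT
    (fun t : Finset N => (t : Set N) ⊆ P ∧ span R P = span R (t : Set N)) ⟨t₀, ht₀⟩
  refine ⟨t, htP, ht.symm, fun f hf hf_span => ?_⟩
  rw [← Finset.coe_erase] at hf_span
  have h_erase : span R P = span R (t.erase f : Set N) := by
    rw [ht, ← span_insert_eq_span hf_span, ← Finset.coe_insert, Finset.insert_erase hf]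
  have h_sub := Finset.erase_subset f t
  exact Finset.notMem_erase f t
    (ht_min ⟨(Finset.coe_subset.2 h_sub).trans htP, h_erase⟩ h_sub hf)

theorem exists_eq_vecMulVec_of_rank_eq_one {m n K : Type*} [Fintype n] [Field K]
    {A : Matrix m n K} (hA : A.rank = 1) : ∃ u v, A = Matrix.vecMulVec u v := by
  classical
  rw [Matrix.rank, finrank_eq_one_iff'] at hA
  obtain ⟨u, -, hu⟩ := hA
  choose v hv using fun j => hu ⟨A.mulVec (Pi.single j 1), LinearMap.mem_range_self A.mulVecLin _⟩
  refine ⟨u, v, Matrix.ext fun i j => ?_⟩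
  have h_col := congrFun (congrArg Subtype.val (hv j)) i
  simpa [Matrix.vecMulVec_apply, mul_comm] using h_col.symm

end LinearAlgebra

section GroupAction

theorem smul_sub_self_mem_of_mem_closure {G M : Type*} [Group G] [AddCommGroup M]
    [DistribMulAction G M] {N : AddSubgroup M} (hN : ∀ g : G, ∀ x ∈ N, g • x ∈ N) {R : Set G}
    {x : M} (hR : ∀ s ∈ R, s • x - x ∈ N) {g : G} (hg : g ∈ Subgroup.closure R) :
    g • x - x ∈ N := by
  induction hg using Subgroup.closure_induction with
  | mem s hs => exact hR s hs
  | one => simp only [one_smul, sub_self, zero_mem]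
  | mul g h _ _ hg hh =>
    have h_split : (g * h) • x - x = g • (h • x - x) + (g • x - x) := by
      rw [mul_smul, smul_sub, sub_add_sub_cancel]
    exact h_split ▸ add_mem (hN g _ hh) hg
  | inv g _ hg =>
    have h_inv : g⁻¹ • x - x = -(g⁻¹ • (g • x - x)) := by
      rw [smul_sub, inv_smul_smul, neg_sub]
    exact h_inv ▸ neg_mem (hN g⁻¹ _ hg)

variable {G A : Type*} [Group G] [CommRing A] [MulSemiringAction G A]

theorem smul_mem_span_of_forall_smul_eq {T : Set A} {g : G} (hT : ∀ f ∈ T, g • f = f) {p : A}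
    (hp : p ∈ Ideal.span T) : g • p ∈ Ideal.span T := by
  have h_image : MulSemiringAction.toRingHom G A g '' T ⊆ T := by
    rintro _ ⟨f, hf, rfl⟩
    rwa [MulSemiringAction.toRingHom_apply, hT f hf]
  have h_map := Ideal.mem_map_of_mem (MulSemiringAction.toRingHom G A g) hp
  rw [Ideal.map_span] at h_map
  exact Ideal.span_mono h_image h_map

theorem smul_sub_self_mem_mul_span {T : Set A} {g : G} (hT : ∀ f ∈ T, g • f = f) {J : Ideal A}
    (hJ : ∀ a : A, g • a - a ∈ J) {p : A} (hp : p ∈ Ideal.span T) :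
    g • p - p ∈ J * Ideal.span T := by
  induction hp using Submodule.span_induction with
  | mem f hf => simp only [hT f hf, sub_self, zero_mem]
  | zero => simp only [smul_zero, sub_self, zero_mem]
  | add p q _ _ hp hq => simpa only [smul_add, add_sub_add_comm] using add_mem hp hq
  | smul a p hp ih =>
    have h_leibniz : g • (a • p) - a • p = (g • a - a) * g • p + a * (g • p - p) := by
      rw [smul_eq_mul, smul_mul']
      ring
    rw [h_leibniz]
    exact add_mem (Ideal.mul_mem_mul (hJ a) (smul_mem_span_of_forall_smul_eq hT hp))
      (Ideal.mul_mem_left _ a ih)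

theorem mul_mem_span_of_smul_sub_self_eq_mul [IsDomain A] {T : Set A} {g : G}
    (hT : ∀ f ∈ T, g • f = f) {l : A} (hl : l ≠ 0) (hlg : ∀ a : A, l ∣ g • a - a) {f h h' : A}
    (hf : g • f = f) (hh' : g • h - h = l * h') (hfh : f * h ∈ Ideal.span T) :
    f * h' ∈ Ideal.span T := by
  have h_mem := smul_sub_self_mem_mul_span hT
    (fun a => Ideal.mem_span_singleton.2 (hlg a)) hfh
  rw [smul_mul', hf, ← mul_sub, hh', Ideal.mem_span_singleton_mul] at h_mem
  obtain ⟨z, hz, hlz⟩ := h_mem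
  rw [mul_left_comm] at hlz
  exact mul_left_cancel₀ hl hlz ▸ hz

end GroupAction

section Reynolds

variable (R : Type*) {G A : Type*} [CommRing R] [Group G] [CommRing A] [Algebra R A]
  [MulSemiringAction G A] [SMulCommClass G R A]

theorem isIntegral_fixedPoints [Finite G] : Algebra.IsIntegral (FixedPoints.subalgebra R A G) A :=
  have : Algebra.IsInvariant (FixedPoints.subalgebra R A G) A G := ⟨fun b hb => ⟨⟨b, hb⟩, rfl⟩⟩
  Algebra.IsInvariant.isIntegral _ A G

variable (G) [Fintype G] [Invertible (Fintype.card G : R)]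

/-- The Reynolds operator, projecting an algebra onto its invariants by averaging over the group. -/
noncomputable def reynolds : A →ₗ[R] A :=
  (Representation.ofDistribMulAction R G A).averageMap

theorem reynolds_apply (a : A) : reynolds R G a = ⅟(Fintype.card G : R) • ∑ g : G, g • a := by
  simp [reynolds, GroupAlgebra.average]

theorem reynolds_mem_fixedPoints (a : A) : reynolds R G a ∈ FixedPoints.subalgebra R A G :=
  (Representation.ofDistribMulAction R G A).averageMap_invariant a

theorem reynolds_eq_self {a : A} (ha : a ∈ FixedPoints.subalgebra R A G) : reynolds R G a = a :=
  (Representation.ofDistribMulAction R G A).averageMap_id a ha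

theorem reynolds_mul {f : A} (hf : f ∈ FixedPoints.subalgebra R A G) (a : A) :
    reynolds R G (f * a) = f * reynolds R G a := by
  have hf_smul (g : G) : g • f = f := hf g
  simp only [reynolds_apply, smul_mul', hf_smul, ← Finset.mul_sum, mul_smul_comm]

theorem reynolds_mem_span {T : Set A} (hT : T ⊆ FixedPoints.subalgebra R A G) {a : A}
    (ha : a ∈ Ideal.span T) : reynolds R G a ∈ Ideal.span T := by
  rw [reynolds_apply, Algebra.smul_def]
  exact Ideal.mul_mem_left _ _ (sum_mem fun g _ =>
    smul_mem_span_of_forall_smul_eq (fun f hf => hT hf g) ha)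

theorem reynolds_sub_self_mem {I : Ideal A} {a : A} (ha : ∀ g : G, g • a - a ∈ I) :
    reynolds R G a - a ∈ I := by
  have h_avg : reynolds R G a - a = ⅟(Fintype.card G : R) • ∑ g : G, (g • a - a) := by
    rw [Finset.sum_sub_distrib, smul_sub, ← reynolds_apply, Finset.sum_const, Finset.card_univ,
      ← Nat.cast_smul_eq_nsmul R, invOf_smul_smul]
  rw [h_avg, Algebra.smul_def]
  exact Ideal.mul_mem_left _ _ (sum_mem fun g _ => ha g)

end Reynolds

section Polynomial

variable {σ R : Type*} [CommSemiring R]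

theorem homogeneousComponent_mul {f : MvPolynomial σ R} {d : ℕ} (hf : f.IsHomogeneous d)
    (h : MvPolynomial σ R) (n : ℕ) :
    homogeneousComponent n (f * h) =
      if d ≤ n then f * homogeneousComponent (n - d) h else 0 := by
  let _ := MvPolynomial.gradedAlgebra (σ := σ) (R := R)
  simpa only [DirectSum.decompose, Equiv.coe_fn_mk, decomposition.decompose'_apply] using
    DirectSum.coe_decompose_mul_of_left_mem (homogeneousSubmodule σ R) n (b := h) hf

theorem homogeneousComponent_mem_span {T : Set (MvPolynomial σ R)}
    (hT : ∀ f ∈ T, ∃ d, f.IsHomogeneous d) {p : MvPolynomial σ R} (hp : p ∈ Ideal.span T) (n : ℕ) :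
    homogeneousComponent n p ∈ Ideal.span T :=
  let _ := MvPolynomial.gradedAlgebra (σ := σ) (R := R)
  homogeneousComponent_mem_of_mem (Ideal.homogeneous_span _ T hT) hp n

theorem isHomogeneous_sum_smul_X [Fintype σ] (v : σ → R) :
    (∑ j, v j • X j : MvPolynomial σ R).IsHomogeneous 1 :=
  IsHomogeneous.sum _ _ _ fun j _ => smul_eq_C_mul (X j) (v j) ▸ isHomogeneous_C_mul_X (v j) j

theorem constantCoeff_eq_zero_of_isHomogeneous {f : MvPolynomial σ R} {d : ℕ} (hd : 0 < d)
    (hf : f.IsHomogeneous d) : constantCoeff f = 0 :=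
  hf.coeff_eq_zero (by simpa using hd.ne)

theorem exists_eq_C_of_isHomogeneous_zero {f : MvPolynomial σ R} (hf : f.IsHomogeneous 0) :
    ∃ c, f = C c :=
  ⟨_, totalDegree_eq_zero_iff_eq_C.1 (Nat.le_zero.1 hf.totalDegree_le)⟩

theorem mem_span_range_X_of_constantCoeff_eq_zero {f : MvPolynomial σ R}
    (hf : constantCoeff f = 0) : f ∈ Ideal.span (Set.range (X : σ → MvPolynomial σ R)) := by
  rw [← Set.image_univ, mem_ideal_span_X_image]
  intro m hm
  have hm0 : m ≠ 0 := by
    rintro rfl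
    exact mem_support_iff.1 hm hf
  obtain ⟨i, hi⟩ := Finsupp.ne_iff.1 hm0
  exact ⟨i, Set.mem_univ i, hi⟩

theorem span_range_X_ne_top [Nontrivial R] :
    Ideal.span (Set.range (X : σ → MvPolynomial σ R)) ≠ ⊤ := by
  have h_le : Ideal.span (Set.range (X : σ → MvPolynomial σ R)) ≤
      RingHom.ker (constantCoeff (R := R) (σ := σ)) := by
    rw [Ideal.span_le]
    rintro _ ⟨i, rfl⟩
    exact constantCoeff_X R i
  exact ne_top_of_le_ne_top (RingHom.ker_ne_top _) h_le

theorem dvd_algHom_sub_of_forall_X {σ R A : Type*} [CommRing R] [CommRing A] [Algebra R A]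
    {φ ψ : MvPolynomial σ R →ₐ[R] A} {l : A} (hl : ∀ i, l ∣ φ (X i) - ψ (X i))
    (p : MvPolynomial σ R) : l ∣ φ p - ψ p := by
  have h_comp : (Ideal.Quotient.mkₐ R (Ideal.span {l})).comp φ =
      (Ideal.Quotient.mkₐ R (Ideal.span {l})).comp ψ := by
    ext1 i
    exact Ideal.Quotient.eq.2 (Ideal.mem_span_singleton.2 (hl i))
  exact Ideal.mem_span_singleton.1 (Ideal.Quotient.eq.1 (DFunLike.congr_fun h_comp p))

theorem constantCoeff_eq_zero_of_mul_mem_span {T : Set (MvPolynomial σ k)}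
    (hT : ∀ f ∈ T, ∃ d, f.IsHomogeneous d) {f : MvPolynomial σ k} {d : ℕ}
    (hf : f.IsHomogeneous d) (hfT : f ∉ Ideal.span T) {h : MvPolynomial σ k}
    (hfh : f * h ∈ Ideal.span T) : constantCoeff h = 0 := by
  by_contra h0
  have h_unit : IsUnit (C (coeff 0 h) : MvPolynomial σ k) := (isUnit_iff_ne_zero.2 h0).map C
  have h_comp := homogeneousComponent_mem_span hT hfh d
  rw [homogeneousComponent_mul hf, if_pos le_rfl, Nat.sub_self, homogeneousComponent_zero,
    Ideal.mul_unit_mem_iff_mem _ h_unit] at h_comp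
  exact hfT h_comp

end Polynomial

section GradedAction

variable (k) (σ G : Type*) [Group G] [MulSemiringAction G (MvPolynomial σ k)]

/-- An action on a polynomial ring by automorphisms that preserve the standard grading. -/
class IsGradedAction : Prop where
  isHomogeneous_smul (g : G) {p : MvPolynomial σ k} {n : ℕ} :
    p.IsHomogeneous n → (g • p).IsHomogeneous n

/-- `s` acts on the polynomial ring as a reflection does: some nonzero linear form, an equation of
the reflecting hyperplane, divides the difference `s • p - p` for every polynomial `p`. -/
def ActsAsReflection {G : Type*} [Group G] [MulSemiringAction G (MvPolynomial σ k)] (s : G) :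
    Prop :=
  ∃ l : MvPolynomial σ k, l ≠ 0 ∧ l.IsHomogeneous 1 ∧ ∀ p : MvPolynomial σ k, l ∣ s • p - p

/-- The homogeneous invariants of positive degree. -/
def positiveInvariants : Set (MvPolynomial σ k) :=
  {p | (∀ g : G, g • p = p) ∧ ∃ d, 0 < d ∧ p.IsHomogeneous d}

/-- The Hilbert ideal of the action: the ideal of the polynomial ring (not of the ring of
invariants) generated by the invariants of positive degree. -/
noncomputable def hilbertIdeal : Ideal (MvPolynomial σ k) :=
  Ideal.span (positiveInvariants k σ G)

variable {k σ G}

theorem smul_mem_hilbertIdeal (g : G) {p : MvPolynomial σ k} (hp : p ∈ hilbertIdeal k σ G) :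
    g • p ∈ hilbertIdeal k σ G :=
  smul_mem_span_of_forall_smul_eq (fun _ hf => hf.1 g) hp

variable [IsGradedAction k σ G]

theorem totalDegree_smul_le (g : G) (p : MvPolynomial σ k) :
    (g • p).totalDegree ≤ p.totalDegree := by
  conv_lhs => rw [← sum_homogeneousComponent p, Finset.smul_sum]
  refine totalDegree_finsetSum_le fun i hi => ?_
  exact (IsGradedAction.isHomogeneous_smul g
    (homogeneousComponent_isHomogeneous i p)).totalDegree_le.trans
      (Nat.le_of_lt_succ (Finset.mem_range.1 hi))

theorem homogeneousComponent_smul (g : G) (p : MvPolynomial σ k) (n : ℕ) :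
    homogeneousComponent n (g • p) = g • homogeneousComponent n p := by
  have hg (i : ℕ) : (g • homogeneousComponent i p).IsHomogeneous i :=
    IsGradedAction.isHomogeneous_smul g (homogeneousComponent_isHomogeneous i p)
  conv_lhs => rw [← sum_homogeneousComponent p, Finset.smul_sum, map_sum]
  refine (Finset.sum_eq_single n (fun i _ hi => ?_) fun hn => ?_).trans
    (homogeneousComponent_eq_self (hg n))
  · exact (homogeneousComponent_of_mem (hg i)).trans (if_neg hi.symm)
  · rw [Finset.mem_range, not_lt, Nat.succ_le_iff] at hn
    rw [homogeneousComponent_eq_zero _ _ hn, smul_zero, map_zero]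

theorem mem_hilbertIdeal_of_constantCoeff_eq_zero {p : MvPolynomial σ k}
    (hp : ∀ g : G, g • p = p) (hp0 : constantCoeff p = 0) : p ∈ hilbertIdeal k σ G := by
  rw [← sum_homogeneousComponent p]
  refine sum_mem fun i _ => ?_
  obtain rfl | hi := i.eq_zero_or_pos
  · rw [homogeneousComponent_zero, ← constantCoeff_eq, hp0, map_zero]
    exact zero_mem _
  · refine Ideal.subset_span ⟨fun g => ?_, i, hi, homogeneousComponent_isHomogeneous i p⟩
    rw [← homogeneousComponent_smul, hp g]

theorem totalDegree_lt_of_smul_sub_self_eq_mul {s : G}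
    {l h h' : MvPolynomial σ k} (hl : l ≠ 0) (hl1 : l.IsHomogeneous 1) (hh'0 : h' ≠ 0)
    (hh' : s • h - h = l * h') : h'.totalDegree < h.totalDegree := by
  have h_mul := totalDegree_mul_of_isDomain hl hh'0
  rw [← hh', hl1.totalDegree hl] at h_mul
  have h_sub := totalDegree_sub (s • h) h
  rw [max_eq_right (totalDegree_smul_le s h)] at h_sub
  lia

variable [SMulCommClass G k (MvPolynomial σ k)] [Fintype G] [Invertible (Fintype.card G : k)]

theorem isHomogeneous_reynolds {p : MvPolynomial σ k} {n : ℕ} (hp : p.IsHomogeneous n) :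
    (reynolds k G p).IsHomogeneous n := by
  rw [reynolds_apply, ← mem_homogeneousSubmodule]
  exact Submodule.smul_mem _ _ (sum_mem fun g _ => IsGradedAction.isHomogeneous_smul g hp)

/-- Chevalley's lemma. Dividing `s • h - h` by the linear form of a reflection `s` lowers the degree
of `h`, so by induction `h` is invariant modulo the Hilbert ideal, and may be averaged. -/
theorem mem_hilbertIdeal_of_mul_mem_span {R : Set G} (hR : Subgroup.closure R = ⊤)
    (hR_refl : ∀ s ∈ R, ActsAsReflection k σ s) {T : Set (MvPolynomial σ k)}
    (hT : T ⊆ positiveInvariants k σ G) {f : MvPolynomial σ k}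
    (hf : f ∈ positiveInvariants k σ G) (hfT : f ∉ Ideal.span T) {h : MvPolynomial σ k}
    (hfh : f * h ∈ Ideal.span T) : h ∈ hilbertIdeal k σ G := by
  induction hn : h.totalDegree using Nat.strong_induction_on generalizing h with | _ n ih
  have h_refl : ∀ s ∈ R, s • h - h ∈ hilbertIdeal k σ G := by
    intro s hs
    obtain ⟨l, hl0, hl1, hl⟩ := hR_refl s hs
    obtain ⟨h', hh'⟩ := hl h
    rw [hh']
    refine Ideal.mul_mem_left _ l ?_
    by_cases hh'0 : h' = 0
    · exact hh'0 ▸ zero_mem _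
    · exact ih _ (hn ▸ totalDegree_lt_of_smul_sub_self_eq_mul hl0 hl1 hh'0 hh')
        (mul_mem_span_of_smul_sub_self_eq_mul (fun p hp => (hT hp).1 s) hl0 hl (hf.1 s) hh' hfh) rfl
  have h_reynolds_sub : reynolds k G h - h ∈ hilbertIdeal k σ G :=
    reynolds_sub_self_mem k G fun g => smul_sub_self_mem_of_mem_closure
      (N := (hilbertIdeal k σ G).toAddSubgroup) (fun g _ => smul_mem_hilbertIdeal g) h_refl
      (hR ▸ Subgroup.mem_top g)
  have h_reynolds : reynolds k G h ∈ hilbertIdeal k σ G := by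
    obtain ⟨d, -, hfd⟩ := hf.2
    refine mem_hilbertIdeal_of_constantCoeff_eq_zero (reynolds_mem_fixedPoints k G h)
      (constantCoeff_eq_zero_of_mul_mem_span
        (fun p hp => (hT hp).2.imp fun _ => And.right) hfd hfT ?_)
    rw [← reynolds_mul k G hf.1]
    exact reynolds_mem_span k G (fun p hp => (hT hp).1) hfh
  exact (Submodule.sub_mem_iff_right _ h_reynolds).1 h_reynolds_sub

theorem isLechIndependent_of_span_eq_hilbertIdeal {R : Set G} (hR : Subgroup.closure R = ⊤)
    (hR_refl : ∀ s ∈ R, ActsAsReflection k σ s) {T : Set (MvPolynomial σ k)}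
    (hT : T ⊆ positiveInvariants k σ G) (hT_span : Ideal.span T = hilbertIdeal k σ G)
    (hT_min : ∀ f ∈ T, f ∉ Ideal.span (T \ {f})) : IsLechIndependent T := fun f hf _ hfc =>
  hT_span ▸ mem_hilbertIdeal_of_mul_mem_span hR hR_refl
    (Set.sdiff_subset.trans hT) (hT hf) (hT_min f hf) hfc

theorem reynolds_homogeneousComponent_mem_adjoin {T : Set (MvPolynomial σ k)}
    (hT : T ⊆ positiveInvariants k σ G) {n : ℕ}
    (h_lt : ∀ m < n, ∀ p ∈ FixedPoints.subalgebra k (MvPolynomial σ k) G, p.IsHomogeneous m →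
      p ∈ Algebra.adjoin k T) {p : MvPolynomial σ k} (hp : p ∈ Ideal.span T) :
    reynolds k G (homogeneousComponent n p) ∈ Algebra.adjoin k T := by
  obtain ⟨c, t, htT, -, rfl⟩ := Submodule.mem_span_iff_exists_finset_subset.1 hp
  simp only [map_sum]
  refine sum_mem fun f hft => ?_
  have hf := htT hft
  obtain ⟨hf_fixed, d, hd, hfd⟩ := hT hf
  rw [smul_eq_mul, mul_comm, homogeneousComponent_mul hfd]
  split_ifs with hdn
  · rw [reynolds_mul k G hf_fixed]
    exact mul_mem (Algebra.subset_adjoin hf) (h_lt (n - d) (by lia) _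
      (reynolds_mem_fixedPoints k G _)
      (isHomogeneous_reynolds (homogeneousComponent_isHomogeneous _ _)))
  · rw [map_zero]
    exact zero_mem _

theorem mem_adjoin_of_isHomogeneous {T : Set (MvPolynomial σ k)}
    (hT : T ⊆ positiveInvariants k σ G) (hT_span : Ideal.span T = hilbertIdeal k σ G) {n : ℕ}
    {p : MvPolynomial σ k} (hp : p ∈ FixedPoints.subalgebra k (MvPolynomial σ k) G)
    (hpn : p.IsHomogeneous n) : p ∈ Algebra.adjoin k T := by
  induction n using Nat.strong_induction_on generalizing p with | _ n ih
  obtain rfl | hn := n.eq_zero_or_pos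
  · obtain ⟨c, rfl⟩ := exists_eq_C_of_isHomogeneous_zero hpn
    exact Subalgebra.algebraMap_mem _ c
  · have hp_span : p ∈ Ideal.span T := hT_span ▸ Ideal.subset_span ⟨hp, n, hn, hpn⟩
    rw [← reynolds_eq_self k G hp, ← homogeneousComponent_eq_self hpn]
    exact reynolds_homogeneousComponent_mem_adjoin hT (fun m hm q => ih m hm) hp_span

theorem adjoin_eq_fixedPoints {T : Set (MvPolynomial σ k)}
    (hT : T ⊆ positiveInvariants k σ G) (hT_span : Ideal.span T = hilbertIdeal k σ G) :
    Algebra.adjoin k T = FixedPoints.subalgebra k (MvPolynomial σ k) G := by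
  refine le_antisymm (Algebra.adjoin_le fun f hf => (hT hf).1) fun p hp => ?_
  rw [← reynolds_eq_self k G hp, ← sum_homogeneousComponent p, map_sum]
  exact sum_mem fun i _ => mem_adjoin_of_isHomogeneous hT hT_span (reynolds_mem_fixedPoints k G _)
    (isHomogeneous_reynolds (homogeneousComponent_isHomogeneous i p))

end GradedAction

section Invariants

theorem IsLechIndependent.card_le_card_vars {σ R : Type*} [Fintype σ] [CommRing R] [Nontrivial R]
    {t : Finset (MvPolynomial σ R)} (ht : IsLechIndependent (t : Set (MvPolynomial σ R)))
    (ht0 : ∀ f ∈ t, constantCoeff f = 0) : t.card ≤ Fintype.card σ := by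
  have h_range : LinearMap.range (Fintype.linearCombination (MvPolynomial σ R)
      (X : σ → MvPolynomial σ R)) = Ideal.span (Set.range X) :=
    Fintype.range_linearCombination _ _
  rw [← Module.finrank_fintype_fun_eq_card (R := MvPolynomial σ R)]
  refine ht.card_le_finrank (h_range ▸ span_range_X_ne_top) fun f hf => ?_
  rw [h_range]
  exact mem_span_range_X_of_constantCoeff_eq_zero (ht0 f hf)

theorem algebraicIndependent_and_card_eq_of_card_le {σ R : Type*} [Fintype σ] [CommRing R]
    [IsDomain R] {t : Finset (MvPolynomial σ R)}
    [Algebra.IsAlgebraic (Algebra.adjoin R (t : Set (MvPolynomial σ R))) (MvPolynomial σ R)]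
    (ht : t.card ≤ Fintype.card σ) :
    AlgebraicIndependent R ((↑) : t → MvPolynomial σ R) ∧ t.card = Fintype.card σ := by
  have : Algebra.IsAlgebraic (Algebra.adjoin R (Set.range ((↑) : t → MvPolynomial σ R)))
      (MvPolynomial σ R) := by
    rwa [Subtype.range_coe_subtype]
  have h_basis : IsTranscendenceBasis R ((↑) : t → MvPolynomial σ R) :=
    Algebra.IsAlgebraic.isTranscendenceBasis_of_lift_le_trdeg_of_finite R _ (by simpa using ht)
  exact ⟨h_basis.1, by simpa using h_basis.lift_cardinalMk_eq_trdeg⟩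

theorem exists_homogeneous_generators_of_closure_reflections {σ G : Type*} [Finite σ] [Group G]
    [Finite G] (hG : (Nat.card G : k) ≠ 0) [MulSemiringAction G (MvPolynomial σ k)]
    [SMulCommClass G k (MvPolynomial σ k)] [IsGradedAction k σ G] {R : Set G}
    (hR : Subgroup.closure R = ⊤) (hR_refl : ∀ s ∈ R, ActsAsReflection k σ s) :
    ∃ f : σ → MvPolynomial σ k, (∀ i, ∃ d, (f i).IsHomogeneous d) ∧ AlgebraicIndependent k f ∧
      Algebra.adjoin k (Set.range f) = FixedPoints.subalgebra k (MvPolynomial σ k) G := by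
  have := Fintype.ofFinite σ
  have := Fintype.ofFinite G
  rw [Nat.card_eq_fintype_card] at hG
  have := invertibleOfNonzero hG
  obtain ⟨t, ht, ht_span, ht_min⟩ := exists_finset_span_eq_and_notMem_span_sdiff
    (R := MvPolynomial σ k) (positiveInvariants k σ G)
  have ht_lech : IsLechIndependent (t : Set (MvPolynomial σ k)) :=
    isLechIndependent_of_span_eq_hilbertIdeal hR hR_refl ht ht_span ht_min
  have ht_card : t.card ≤ Fintype.card σ := ht_lech.card_le_card_vars fun f hf => by
    obtain ⟨-, d, hd, hfd⟩ := ht hf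
    exact constantCoeff_eq_zero_of_isHomogeneous hd hfd
  have ht_adjoin := adjoin_eq_fixedPoints ht ht_span
  have : Algebra.IsIntegral (Algebra.adjoin k (t : Set (MvPolynomial σ k))) (MvPolynomial σ k) :=
    ht_adjoin ▸ isIntegral_fixedPoints k
  obtain ⟨h_indep, h_card⟩ := algebraicIndependent_and_card_eq_of_card_le ht_card
  let e : σ ≃ t := Fintype.equivOfCardEq (by rw [Fintype.card_coe, h_card])
  have h_range : Set.range ((↑) ∘ e : σ → MvPolynomial σ k) = t := by
    rw [e.surjective.range_comp, Subtype.range_coe_subtype, Finset.setOfPred_mem]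
  exact ⟨(↑) ∘ e, fun i => (ht (e i).2).2.imp fun _ => And.right, h_indep.comp e e.injective,
    h_range ▸ ht_adjoin⟩

end Invariants

section GeneralLinearGroup

theorem matrixAct_X (g : GL (Fin r) k) (i : Fin r) :
    matrixAct g (X i) = ∑ j, (g : Matrix (Fin r) (Fin r) k) i j • X j :=
  aeval_X _ i

theorem matrixAct_one : matrixAct (1 : GL (Fin r) k) = AlgHom.id k _ := by
  ext1 i
  simp [matrixAct_X, Matrix.one_apply]

theorem matrixAct_mul (g h : GL (Fin r) k) :
    matrixAct (g * h) = (matrixAct h).comp (matrixAct g) := by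
  ext1 i
  simp only [AlgHom.comp_apply, matrixAct_X, map_sum, map_smul, Units.val_mul, Matrix.mul_apply,
    Finset.sum_smul, Finset.smul_sum, smul_smul]
  exact Finset.sum_comm

theorem isHomogeneous_matrixAct (g : GL (Fin r) k) {p : MvPolynomial (Fin r) k} {n : ℕ}
    (hp : p.IsHomogeneous n) : (matrixAct g p).IsHomogeneous n := by
  simpa only [matrixAct, one_mul] using hp.aeval _ fun i => isHomogeneous_sum_smul_X _

/-- The contragredient action of `GL (Fin r) k` on polynomials. The inverse makes it a left
action, since `matrixAct` reverses products. -/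
noncomputable instance instMulSemiringActionGL :
    MulSemiringAction (GL (Fin r) k) (MvPolynomial (Fin r) k) where
  smul g := matrixAct g⁻¹
  one_smul p := by
    change matrixAct 1⁻¹ p = p
    rw [inv_one, matrixAct_one, AlgHom.id_apply]
  mul_smul g h p := by
    change matrixAct (g * h)⁻¹ p = matrixAct g⁻¹ (matrixAct h⁻¹ p)
    rw [mul_inv_rev, matrixAct_mul, AlgHom.comp_apply]
  smul_zero g := map_zero (matrixAct g⁻¹)
  smul_add g := map_add (matrixAct g⁻¹)
  smul_one g := map_one (matrixAct g⁻¹)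
  smul_mul g := map_mul (matrixAct g⁻¹)

instance instSMulCommClassGL : SMulCommClass (GL (Fin r) k) k (MvPolynomial (Fin r) k) :=
  ⟨fun g => map_smul (matrixAct g⁻¹)⟩

instance instIsGradedActionSubgroup (W : Subgroup (GL (Fin r) k)) :
    IsGradedAction k (Fin r) W :=
  ⟨fun g _ _ => isHomogeneous_matrixAct (g : GL (Fin r) k)⁻¹⟩

theorem matrixAct_smul (g : GL (Fin r) k) (p : MvPolynomial (Fin r) k) :
    matrixAct g (g • p) = p := by
  change matrixAct g (matrixAct g⁻¹ p) = p
  rw [← AlgHom.comp_apply, ← matrixAct_mul, inv_mul_cancel, matrixAct_one, AlgHom.id_apply]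

theorem mem_fixedPoints_subgroup_iff {W : Subgroup (GL (Fin r) k)} {p : MvPolynomial (Fin r) k} :
    p ∈ FixedPoints.subalgebra k (MvPolynomial (Fin r) k) W ↔ ∀ g ∈ W, matrixAct g p = p := by
  constructor
  · intro hp g hg
    rw [← inv_inv g]
    exact hp ⟨g⁻¹, inv_mem hg⟩
  · exact fun hp g => hp _ (inv_mem g.2)

theorem matrixAct_X_sub_X_of_sub_one_eq_vecMulVec {g : GL (Fin r) k} {u v : Fin r → k}
    (hg : (g : Matrix (Fin r) (Fin r) k) - 1 = Matrix.vecMulVec u v) (i : Fin r) :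
    matrixAct g (X i) - X i = u i • ∑ j, v j • X j := by
  have h_one : (X i : MvPolynomial (Fin r) k) =
      ∑ j, (1 : Matrix (Fin r) (Fin r) k) i j • X j := by
    simp [Matrix.one_apply]
  rw [matrixAct_X, h_one, ← Finset.sum_sub_distrib, Finset.smul_sum]
  refine Finset.sum_congr rfl fun j _ => ?_
  rw [← sub_smul, smul_smul]
  exact congrArg (· • X j) (congrFun (congrFun hg i) j)

theorem actsAsReflection_of_rank_sub_one_eq_one {g : GL (Fin r) k}
    (hg : ((g : Matrix (Fin r) (Fin r) k) - 1).rank = 1) : ActsAsReflection k (Fin r) g := by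
  obtain ⟨u, v, huv⟩ := exists_eq_vecMulVec_of_rank_eq_one hg
  have hv : v ≠ 0 := by
    rintro rfl
    simp [huv] at hg
  refine ⟨∑ j, v j • X j, fun h_zero => hv ?_, isHomogeneous_sum_smul_X v, fun p => ?_⟩
  · have h_coeff (j : Fin r) := congrArg (coeff (Finsupp.single j 1)) h_zero
    ext j
    simpa [coeff_sum, coeff_X, Finsupp.single_left_inj] using h_coeff j
  · rw [dvd_sub_comm]
    nth_rw 1 [← matrixAct_smul g p]
    refine dvd_algHom_sub_of_forall_X (φ := matrixAct g) (ψ := AlgHom.id k _) (fun i => ?_) (g • p)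
    rw [AlgHom.id_apply, matrixAct_X_sub_X_of_sub_one_eq_vecMulVec huv]
    exact Dvd.intro_left (C (u i)) (smul_eq_C_mul _ _).symm

end GeneralLinearGroup

/-- The Chevalley–Shephard–Todd theorem: if a finite group `G` acts on `V = k^r`
by (a group generated by) pseudo-reflections, with `char k` not dividing `|G|`, then
the invariant ring `k[V]^G` is a polynomial algebra on `r = dim V` homogeneous
generators. -/
theorem polynomial_invariants_of_reflection_group
    (G : Type*) [Group G] [Finite G] (hchar : ¬ (ringChar k : ℕ) ∣ Nat.card G)
    (ρ : G →* GL (Fin r) k)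
    (hrefl : Subgroup.closure {g | g ∈ ρ.range ∧ IsPseudoReflection g} = ρ.range) :
    ∃ (d : Fin r → ℕ) (f : Fin r → MvPolynomial (Fin r) k),
      (∀ i, (f i).IsHomogeneous (d i)) ∧ AlgebraicIndependent k f ∧
        ∀ h : MvPolynomial (Fin r) k,
          (∀ g : G, matrixAct (ρ g) h = h) ↔ h ∈ Algebra.adjoin k (Set.range f) := by
  set R := {g | g ∈ ρ.range ∧ IsPseudoReflection g}
  have : Finite (Subgroup.closure R) := by
    rw [hrefl]
    exact Finite.of_surjective _ ρ.rangeRestrict_surjective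
  have h_card : (Nat.card (Subgroup.closure R) : k) ≠ 0 := by
    rw [hrefl, ne_eq, ringChar.spec]
    exact fun h_dvd => hchar (h_dvd.trans (Subgroup.card_range_dvd ρ))
  obtain ⟨f, hf, h_indep, h_adjoin⟩ := exists_homogeneous_generators_of_closure_reflections h_card
    Subgroup.closure_closure_coe_preimage
    fun s (hs : (s : GL (Fin r) k) ∈ R) => actsAsReflection_of_rank_sub_one_eq_one hs.2.2.2
  choose d hd using hf
  refine ⟨d, f, hd, h_indep, fun h => ?_⟩
  rw [h_adjoin, mem_fixedPoints_subgroup_iff, hrefl]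
  simp only [MonoidHom.mem_range, forall_exists_index, forall_apply_eq_imp_iff]
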